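/- arXiv:math/9902109 — 3 statements merged into one kernel-verified Lean document; each statement's English description precedes it below -/
import Mathlib

section
/- For all integers m and n, the following relations hold as ℚ-linear endomorphisms of Λ: S_m S_n + S_{n+1} S_{m−1} = 0; S*_m S*_n + S*_{n−1} S*_{m+1} = 0; and S_m S*_n − S_{m−1} S*_{n−1} = S*_n S_m − S*_{n+1} S_{m+1}. (These are the quadratic relations satisfied by the components of the vertex operator S(z) and the dual vertex operator S*(z).) -/
/-!
The generating operator `∑ⱼ gⱼ(∂) tʲ` of a family `∑ₖ gₖ tᵏ = exp (∑ₙ cₙ pₙ tⁿ / n)` is the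
exponential of the derivation `∑ₙ cₙ tⁿ ∂/∂pₙ`, hence the *ring homomorphism* `pₙ ↦ pₙ + cₙ tⁿ`.
After replacing `e_k` by `(-1)ᵏ e_k`, with generating function `exp (-∑ₙ pₙ tⁿ / n)`, both vertex
operators take the form `f ↦ G_c(z) · f(pₙ - cₙ z⁻ⁿ)` with `G_c(z) = exp (∑ₙ cₙ pₙ zⁿ / n)`, where
`c = 1` for `S(z)` and `c = -1` for `S*(z)`. Composing two of them, the inner factor `G_d(w)` picks
up `exp (-∑ₙ cₙ dₙ (w / z)ⁿ / n)`, which is `1 - w / z` if `cₙ dₙ = 1` and `(1 - w / z)⁻¹` if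
`cₙ dₙ = -1`; what remains is the normally ordered product
`G_c(z) G_d(w) · f(pₙ - cₙ z⁻ⁿ - dₙ w⁻ⁿ)`, which is symmetric in `(c, z)` and `(d, w)`.
-/

open MvPolynomial

noncomputable section

/-- The ring of symmetric functions `Λ = ℚ[p₁,p₂,…]`, with the variable `X n`
(for `n : ℕ+`) playing the role of the power sum `p_n`. -/
abbrev Lam : Type := MvPolynomial ℕ+ ℚ

/-- The power sum `p_n`. -/
def pp (n : ℕ+) : Lam := X n

/-- The family `g` with generating function `∑_k g_k t^k = exp (∑_{n≥1} c n · p_n tⁿ / n)`,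
characterized by `g 0 = 1` together with the recursion obtained by differentiating the
generating function:  `(k+1) · g (k+1) = ∑_{i=0}^{k} c (i+1) · p_{i+1} · g (k-i)`. -/
def genFam (c : ℕ → ℚ) : ℕ → Lam
  | 0 => 1
  | (k+1) => (((k : ℚ) + 1)⁻¹) •
      ∑ i ∈ Finset.range (k+1), c (i+1) • (pp ⟨i+1, Nat.succ_pos i⟩ * genFam c (k - i))
  decreasing_by exact Nat.lt_succ_of_le (Nat.sub_le k i)

/-- The complete homogeneous symmetric function `h_k`,
with generating function `exp (∑ p_n tⁿ/n)`. -/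
def hh : ℕ → Lam := genFam fun _ => 1

/-- The elementary symmetric function `e_k`,
with generating function `exp (∑ (−1)^{n−1} p_n tⁿ/n)`. -/
def ee : ℕ → Lam := genFam fun n => (-1)^(n+1)

/-- `h` indexed by `ℤ` (zero for negative indices). -/
def hZ (n : ℤ) : Lam := if 0 ≤ n then hh n.toNat else 0

/-- `e` indexed by `ℤ` (zero for negative indices). -/
def eZ (n : ℤ) : Lam := if 0 ≤ n then ee n.toNat else 0

/-- The differential operator `∏_i (i·∂/∂p_i)^(α i)` (the factors commute,
so the sorted product is the canonical one). -/
def monOp (α : ℕ+ →₀ ℕ) : Module.End ℚ Lam :=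
  ((α.support.sort (· ≤ ·)).map fun (i : ℕ+) => (((i : ℕ) : ℚ) • (pderiv i).toLinearMap) ^ (α i)).prod

/-- `f(∂) P`: substitute `p_i ↦ i·∂/∂p_i` in `f` and apply the result to `P`. -/
def Dop (f : Lam) (P : Lam) : Lam := ∑ α ∈ f.support, f.coeff α • monOp α P

/-- A bound for the weighted degree (`p_i` of weight `i`) of `P`;
`e_j(∂) P = 0 = h_j(∂) P` whenever `j > wbound P`. -/
def wbound (P : Lam) : ℕ := P.support.sup fun α => α.sum fun i k => (i : ℕ) * k

/-- The vertex operator component `S_n = ∑_{j ≥ max(0,n)} (−1)^j h_{j−n} · e_j(∂)`;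
on a given polynomial only the (finitely many) terms with `j ≤ wbound P` act nontrivially. -/
def Sop (n : ℤ) (P : Lam) : Lam :=
  ∑ j ∈ Finset.range (wbound P + 1),
    if n ≤ (j : ℤ) then ((-1 : ℚ)) ^ j • (hZ ((j : ℤ) - n) * Dop (ee j) P) else 0

/-- The dual vertex operator component `S*_n = ∑_{j ≥ max(0,−n)} (−1)^{j+n} e_{j+n} · h_j(∂)`. -/
def SstarOp (n : ℤ) (P : Lam) : Lam :=
  ∑ j ∈ Finset.range (wbound P + 1),
    if -n ≤ (j : ℤ) then ((-1 : ℚ)) ^ ((j : ℤ) + n) • (eZ ((j : ℤ) + n) * Dop (hh j) P) else 0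

/-- The Schur function of an arbitrary integer tuple, via the Jacobi–Trudi determinant
`s_ρ = det (h_{ρ_i − i + j})`. -/
def schur {l : ℕ} (ρ : Fin l → ℤ) : Lam :=
  (Matrix.of fun i j : Fin l => hZ (ρ i - (i.1 : ℤ) + (j.1 : ℤ))).det

/-- The dual Schur function of an integer tuple, `s_{ρ'} = det (e_{ρ_i − i + j})`. -/
def schurE {l : ℕ} (ρ : Fin l → ℤ) : Lam :=
  (Matrix.of fun i j : Fin l => eZ (ρ i - (i.1 : ℤ) + (j.1 : ℤ))).det

open scoped Polynomial PowerSeries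

section Series

variable {R S : Type*} [CommSemiring R] [CommSemiring S]

lemma derivative_map (φ : R →+* S) (F : R⟦X⟧) : d⁄dX S (F.map φ) = (d⁄dX R F).map φ := by
  ext n
  simp [PowerSeries.coeff_derivative]

lemma eq_of_derivative_eq_mul [IsAddTorsionFree R] {A F G : R⟦X⟧}
    (hF : d⁄dX R F = A * F) (hG : d⁄dX R G = A * G)
    (h₀ : PowerSeries.constantCoeff F = PowerSeries.constantCoeff G) : F = G := by
  ext n
  induction n using Nat.strong_induction_on with
  | _ n ih =>
    cases n with
    | zero => simpa using h₀
    | succ n =>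
      have hcoeff : PowerSeries.coeff n (d⁄dX R F) = PowerSeries.coeff n (d⁄dX R G) := by
        rw [hF, hG, PowerSeries.coeff_mul, PowerSeries.coeff_mul]
        refine Finset.sum_congr rfl fun p hp => ?_
        rw [ih p.2 (by have := Finset.HasAntidiagonal.mem_antidiagonal.1 hp; omega)]
      refine nsmul_right_injective n.succ_ne_zero ?_
      simpa [PowerSeries.coeff_derivative, mul_comm, add_mul] using hcoeff

/-- The coefficient of `z ^ n` in a power series, for an integer exponent `n`. -/
def coeffInt (F : R⟦X⟧) (n : ℤ) : R :=
  if 0 ≤ n then PowerSeries.coeff n.toNat F else 0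

/-- The coefficient of `z ^ (-n)` in the product `F(z) * q(z⁻¹)` of a power series in `z` and a
polynomial in `z⁻¹`. -/
def laurentCoeff (F : R⟦X⟧) (n : ℤ) : R[X] →ₗ[R] R :=
  Polynomial.lsum fun j => coeffInt F (j - n) • LinearMap.id

lemma laurentCoeff_monomial (F : R⟦X⟧) (n : ℤ) (j : ℕ) (r : R) :
    laurentCoeff F n (Polynomial.monomial j r) = coeffInt F (j - n) * r := by
  simp [laurentCoeff, Polynomial.lsum_apply]

lemma laurentCoeff_X_mul (F : R⟦X⟧) (n : ℤ) (q : R[X]) :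
    laurentCoeff F n (Polynomial.X * q) = laurentCoeff F (n - 1) q := by
  induction q using Polynomial.induction_on' with
  | add p q hp hq => rw [mul_add, map_add, map_add, hp, hq]
  | monomial j r =>
    rw [Polynomial.X_mul_monomial, laurentCoeff_monomial, laurentCoeff_monomial]
    congr 2
    push_cast
    ring

lemma map_coeffInt (φ : R →+* S) (F : R⟦X⟧) (n : ℤ) :
    φ (coeffInt F n) = coeffInt (F.map φ) n := by
  simp [coeffInt, apply_ite φ]

lemma map_laurentCoeff (φ : R →+* S) (F : R⟦X⟧) (n : ℤ) (q : R[X]) :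
    φ (laurentCoeff F n q) = laurentCoeff (F.map φ) n (q.map φ) := by
  induction q using Polynomial.induction_on' with
  | add p q hp hq => rw [map_add, map_add, Polynomial.map_add, map_add, hp, hq]
  | monomial j r =>
    rw [Polynomial.map_monomial, laurentCoeff_monomial, laurentCoeff_monomial, map_mul,
      map_coeffInt]

lemma laurentCoeff_laurentCoeff_swap (F G : R⟦X⟧) (m n : ℤ) (Q : R[X][X]) :
    laurentCoeff F m (laurentCoeff (G.map Polynomial.C) n Q) =
      laurentCoeff G n (laurentCoeff (F.map Polynomial.C) m (Polynomial.Bivariate.swap Q)) := by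
  induction Q using Polynomial.induction_on' with
  | add P Q hP hQ => simp only [map_add, hP, hQ]
  | monomial j q =>
    induction q using Polynomial.induction_on' with
    | add p q hp hq => simp only [map_add, hp, hq]
    | monomial i r =>
      rw [Polynomial.Bivariate.swap_monomial_monomial]
      simp only [laurentCoeff_monomial, ← map_coeffInt, Polynomial.C_mul_monomial]
      ring

end Series

section SeriesRing

variable {R : Type*} [CommRing R]

lemma one_sub_C_mul_X_mul_mk_pow_succ (a : R) :
    (1 - PowerSeries.C a * PowerSeries.X) * PowerSeries.mk (fun n => a ^ (n + 1)) =
      PowerSeries.C a := by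
  ext n
  cases n with
  | zero => simp [sub_mul, mul_assoc]
  | succ n =>
    simp [sub_mul, mul_assoc, PowerSeries.coeff_succ_X_mul, pow_succ' a (n + 1)]

-- `a / (1 - a X)` is minus the logarithmic derivative of `1 - a X`.
lemma eq_one_sub_C_mul_X_mul [IsAddTorsionFree R] {A B F G : R⟦X⟧} {a : R}
    (hF : d⁄dX R F = A * F) (hG : d⁄dX R G = B * G)
    (hAB : B = A + PowerSeries.mk fun n => a ^ (n + 1))
    (h₀ : PowerSeries.constantCoeff F = PowerSeries.constantCoeff G) :
    F = (1 - PowerSeries.C a * PowerSeries.X) * G := by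
  refine eq_of_derivative_eq_mul hF ?_ (by simpa using h₀)
  have h : d⁄dX R (1 - PowerSeries.C a * PowerSeries.X : R⟦X⟧) = -PowerSeries.C a := by
    simp [PowerSeries.derivative_C, PowerSeries.derivative_X]
  rw [Derivation.leibniz, h, hG, hAB, smul_eq_mul, smul_eq_mul]
  linear_combination G * one_sub_C_mul_X_mul_mk_pow_succ a

lemma coeffInt_one_sub_C_mul_X_mul (a : R) (F : R⟦X⟧) (n : ℤ) :
    coeffInt ((1 - PowerSeries.C a * PowerSeries.X) * F) n =
      coeffInt F n - a * coeffInt F (n - 1) := by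
  rcases lt_trichotomy n 0 with hn | rfl | hn
  · simp [coeffInt, hn.not_ge, show ¬ 1 ≤ n by omega]
  · simp [coeffInt]
  · obtain ⟨k, rfl⟩ : ∃ k : ℕ, n = k + 1 := ⟨(n - 1).toNat, by omega⟩
    have h : ((k : ℤ) + 1).toNat = k + 1 := by omega
    simp [coeffInt, h, show (0 : ℤ) ≤ k + 1 by omega, sub_mul, mul_assoc,
      PowerSeries.coeff_succ_X_mul]

lemma laurentCoeff_one_sub_C_mul_X_mul (a : R) (F : R⟦X⟧) (n : ℤ) (q : R[X]) :
    laurentCoeff ((1 - PowerSeries.C a * PowerSeries.X) * F) n q =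
      laurentCoeff F n q - a * laurentCoeff F (n + 1) q := by
  induction q using Polynomial.induction_on' with
  | add p q hp hq => simp only [map_add, hp, hq]; ring
  | monomial j r =>
    simp only [laurentCoeff_monomial, coeffInt_one_sub_C_mul_X_mul, sub_sub]
    ring

end SeriesRing

/-- The Heisenberg generator `b_i = i · ∂/∂p_i` for `i ≥ 1`. -/
def annihilation (i : ℕ+) : Module.End ℚ Lam := ((i : ℕ) : ℚ) • (pderiv i).toLinearMap

lemma annihilation_apply (i : ℕ+) (P : Lam) : annihilation i P = ((i : ℕ) : ℚ) • pderiv i P := rfl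

lemma commute_annihilation (i j : ℕ+) : Commute (annihilation i) (annihilation j) := by
  have h : ⁅(pderiv i : Derivation ℚ Lam Lam), (pderiv j : Derivation ℚ Lam Lam)⁆ = 0 :=
    derivation_ext fun k => by
      simp only [Derivation.commutator_apply, pderiv_X, Derivation.zero_apply, Pi.single_apply]
      split_ifs <;> simp
  have hP (P : Lam) : pderiv i (pderiv j P) = pderiv j (pderiv i P) := by
    simpa [Derivation.commutator_apply, sub_eq_zero] using congrArg (fun D => D P) h
  refine LinearMap.ext fun P => ?_
  simp only [Module.End.mul_apply, annihilation_apply, Derivation.map_smul, hP]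
  rw [smul_comm]

lemma annihilation_mul (i : ℕ+) (P Q : Lam) :
    annihilation i (P * Q) = annihilation i P * Q + P * annihilation i Q := by
  simp only [annihilation_apply, Derivation.leibniz, smul_eq_mul, smul_add, mul_smul_comm,
    smul_mul_assoc]
  rw [add_comm, mul_comm Q]

lemma annihilation_pp (i j : ℕ+) : annihilation i (pp j) = if i = j then (j : Lam) else 0 := by
  obtain rfl | h := eq_or_ne i j
  · simp [annihilation_apply, pp, Algebra.smul_def]
  · simp [annihilation_apply, pp, pderiv_X_of_ne h.symm, h]

instance isMulCommutative_adjoin_annihilation :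
    IsMulCommutative (Algebra.adjoin ℚ (Set.range annihilation)) :=
  Algebra.isMulCommutative_adjoin ℚ <| by
    rintro _ ⟨i, rfl⟩ _ ⟨j, rfl⟩
    exact commute_annihilation i j

open scoped IsMulCommutative in
/-- The substitution `f ↦ f(∂)` as an algebra homomorphism. Since `Module.End ℚ Lam` is not
commutative, it is built through the commutative subalgebra generated by the `b_i`. -/
def diffOpHom : Lam →ₐ[ℚ] Module.End ℚ Lam :=
  (Algebra.adjoin ℚ (Set.range annihilation)).val.comp
    (aeval fun i => ⟨annihilation i, Algebra.subset_adjoin (Set.mem_range_self i)⟩)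

lemma diffOpHom_pp (i : ℕ+) : diffOpHom (pp i) = annihilation i := by simp [diffOpHom, pp]

open scoped IsMulCommutative in
lemma diffOpHom_monomial (α : ℕ+ →₀ ℕ) (r : ℚ) : diffOpHom (monomial α r) = r • monOp α := by
  rw [diffOpHom, AlgHom.comp_apply, aeval_monomial, Finsupp.prod, ← Finset.prod_map_toList,
    (α.support.sort_perm_toList (· ≤ ·)).symm.map _ |>.prod_eq, ← Algebra.smul_def, map_smul,
    map_list_prod, List.map_map]
  rfl

lemma Dop_eq_diffOpHom (f P : Lam) : Dop f P = diffOpHom f P := by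
  conv_rhs => rw [f.as_sum]
  simp only [Dop, map_sum, diffOpHom_monomial, LinearMap.sum_apply, LinearMap.smul_apply]

lemma Dop_smul (r : ℚ) (f P : Lam) : Dop (r • f) P = r • Dop f P := by
  simp [Dop_eq_diffOpHom]

lemma genFam_succ (c : ℕ → ℚ) (k : ℕ) :
    ((k : ℚ) + 1) • genFam c (k + 1) =
      ∑ i ∈ Finset.range (k + 1), c (i + 1) • (pp i.succPNat * genFam c (k - i)) := by
  rw [genFam, smul_inv_smul₀ (by positivity)]
  rfl

lemma genFam_pow_mul (r : ℚ) (c : ℕ → ℚ) (k : ℕ) :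
    genFam (fun n => r ^ n * c n) k = r ^ k • genFam c k := by
  induction k using Nat.strong_induction_on with
  | _ k ih =>
    cases k with
    | zero => simp [genFam]
    | succ k =>
      refine smul_right_injective Lam (show (k : ℚ) + 1 ≠ 0 by positivity) ?_
      dsimp only
      rw [smul_comm, genFam_succ, genFam_succ, Finset.smul_sum]
      refine Finset.sum_congr rfl fun i hi => ?_
      have hi : i ≤ k := Nat.lt_succ_iff.1 (Finset.mem_range.1 hi)
      rw [ih _ (by omega), mul_smul_comm, smul_smul, smul_smul]
      congr 1
      rw [show k + 1 = (i + 1) + (k - i) by omega, pow_add]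
      ring

lemma Dop_genFam_succ (c : ℕ → ℚ) (k : ℕ) (P : Lam) :
    ((k : ℚ) + 1) • Dop (genFam c (k + 1)) P =
      ∑ i ∈ Finset.range (k + 1),
        c (i + 1) • Dop (genFam c (k - i)) (annihilation i.succPNat P) := by
  simp only [Dop_eq_diffOpHom]
  rw [← LinearMap.smul_apply, ← map_smul, genFam_succ]
  simp only [map_sum, map_smul, LinearMap.sum_apply, LinearMap.smul_apply, mul_comm (pp _),
    map_mul, diffOpHom_pp, Module.End.mul_apply]

/-- The translation `p_n ↦ p_n + c n • t ^ n`; the coefficient of `t ^ k` of its value at `P` is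
`genFam c k (∂) P`, see `Dop_genFam`. -/
def powerSumShift (c : ℕ → ℚ) : Lam →ₐ[ℚ] Lam[X] :=
  aeval fun i => Polynomial.C (pp i) + c i • Polynomial.X ^ (i : ℕ)

lemma powerSumShift_pp (c : ℕ → ℚ) (i : ℕ+) :
    powerSumShift c (pp i) = Polynomial.C (pp i) + c i • Polynomial.X ^ (i : ℕ) :=
  aeval_X _ i

lemma coeff_zero_powerSumShift (c : ℕ → ℚ) (P : Lam) : (powerSumShift c P).coeff 0 = P := by
  induction P using MvPolynomial.induction_on with
  | C a => simp [powerSumShift, IsScalarTower.algebraMap_apply ℚ Lam Lam[X]]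
  | add P Q hP hQ => rw [map_add, Polynomial.coeff_add, hP, hQ]
  | mul_X P n hP =>
    rw [map_mul, Polynomial.mul_coeff_zero, hP, ← pp, powerSumShift_pp]
    simp [n.ne_zero.symm]

-- Chain rule for `d/dt`; the sum over all `i` is finite because `b_i` kills `P` for large `i`.
lemma eventually_derivative_powerSumShift (c : ℕ → ℚ) (P : Lam) :
    ∀ᶠ N in Filter.atTop, Polynomial.derivative (powerSumShift c P) =
      ∑ i ∈ Finset.range N,
        c (i + 1) • (powerSumShift c (annihilation i.succPNat P) * Polynomial.X ^ i) := by
  induction P using MvPolynomial.induction_on with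
  | C a => simp [powerSumShift, annihilation_apply, IsScalarTower.algebraMap_apply ℚ Lam Lam[X]]
  | add P Q hP hQ =>
    filter_upwards [hP, hQ] with N hPN hQN
    simp only [map_add, hPN, hQN, add_mul, smul_add, Finset.sum_add_distrib]
  | mul_X P n hP =>
    filter_upwards [hP, Filter.eventually_ge_atTop (n : ℕ)] with N hPN hn
    obtain ⟨n, rfl⟩ : ∃ k : ℕ, n = k.succPNat := ⟨n.natPred, by simp⟩
    have hnN : n ∈ Finset.range N := Finset.mem_range.2 hn
    rw [← pp]
    simp only [annihilation_mul, annihilation_pp, map_add, map_mul, Polynomial.derivative_mul, hPN,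
      add_mul, smul_add, Finset.sum_add_distrib]
    congr 1
    · rw [Finset.sum_mul]
      refine Finset.sum_congr rfl fun i _ => ?_
      rw [smul_mul_assoc, mul_right_comm]
    · rw [Finset.sum_eq_single_of_mem n hnN fun i _ hi => by simp [hi]]
      simp [powerSumShift_pp, mul_assoc, mul_left_comm]

lemma natDegree_powerSumShift_le (c : ℕ → ℚ) (P : Lam) :
    (powerSumShift c P).natDegree ≤ wbound P := by
  conv_lhs => rw [P.as_sum, map_sum]
  refine Polynomial.natDegree_sum_le_of_forall_le _ _ fun α hα => ?_
  refine le_trans ?_ (Finset.le_sup (f := fun α : ℕ+ →₀ ℕ => α.sum fun i k => (i : ℕ) * k) hα)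
  rw [powerSumShift, aeval_monomial, IsScalarTower.algebraMap_apply ℚ Lam Lam[X]]
  refine (Polynomial.natDegree_C_mul_le _ _).trans ((Polynomial.natDegree_prod_le _ _).trans ?_)
  refine Finset.sum_le_sum fun i _ => ?_
  simp only [mul_comm (i : ℕ)]
  refine Polynomial.natDegree_pow_le_of_le _ ?_
  refine Polynomial.natDegree_add_le_of_degree_le (by simp) ?_
  exact (Polynomial.natDegree_smul_le _ _).trans (Polynomial.natDegree_X_pow_le _)

lemma coeff_succ_powerSumShift (c : ℕ → ℚ) (k : ℕ) (P : Lam) :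
    ((k : ℚ) + 1) • (powerSumShift c P).coeff (k + 1) =
      ∑ i ∈ Finset.range (k + 1),
        c (i + 1) • (powerSumShift c (annihilation i.succPNat P)).coeff (k - i) := by
  obtain ⟨N, hN, hk⟩ := ((eventually_derivative_powerSumShift c P).and
    (Filter.eventually_ge_atTop (k + 1))).exists
  have hcoeff := congrArg (Polynomial.coeff · k) hN
  simp only [Polynomial.coeff_derivative, Polynomial.finsetSum_coeff, Polynomial.coeff_smul,
    Polynomial.coeff_mul_X_pow'] at hcoeff
  rw [Algebra.smul_def, mul_comm, map_add, map_natCast, map_one, hcoeff]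
  refine (Finset.sum_subset_zero_on_sdiff (Finset.range_subset_range.2 hk) (fun i hi => ?_)
    fun i hi => ?_).symm
  · have hik : ¬ i ≤ k := by simpa using (Finset.mem_sdiff.1 hi).2
    rw [if_neg hik, smul_zero]
  · rw [if_pos (Nat.lt_succ_iff.1 (Finset.mem_range.1 hi))]

theorem Dop_genFam (c : ℕ → ℚ) (k : ℕ) (P : Lam) :
    Dop (genFam c k) P = (powerSumShift c P).coeff k := by
  induction k using Nat.strong_induction_on generalizing P with
  | _ k ih =>
    cases k with
    | zero => simp [genFam, Dop_eq_diffOpHom, coeff_zero_powerSumShift]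
    | succ k =>
      refine smul_right_injective Lam (show (k : ℚ) + 1 ≠ 0 by positivity) ?_
      simp only [Dop_genFam_succ, coeff_succ_powerSumShift]
      exact Finset.sum_congr rfl fun i _ => by rw [ih _ (by omega)]

/-- The generating function `exp (∑ c n · p_n zⁿ / n)` of `genFam c`. -/
def genSeries (c : ℕ → ℚ) : Lam⟦X⟧ := PowerSeries.mk (genFam c)

/-- The series `∑ c n · p_n z ^ (n - 1)`, the logarithmic derivative of `genSeries c`. -/
def powerSumSeries (c : ℕ → ℚ) : Lam⟦X⟧ := PowerSeries.mk fun n => c (n + 1) • pp n.succPNat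

lemma derivative_genSeries (c : ℕ → ℚ) :
    d⁄dX Lam (genSeries c) = powerSumSeries c * genSeries c := by
  ext1 n
  rw [PowerSeries.coeff_derivative, PowerSeries.coeff_mul,
    Finset.Nat.sum_antidiagonal_eq_sum_range_succ_mk]
  simp only [genSeries, powerSumSeries, PowerSeries.coeff_mk, smul_mul_assoc]
  rw [← genFam_succ, Algebra.smul_def, mul_comm, map_add, map_natCast, map_one]

lemma constantCoeff_map_genSeries {R : Type*} [CommSemiring R] (φ : Lam →+* R) (c : ℕ → ℚ) :
    PowerSeries.constantCoeff ((genSeries c).map φ) = 1 := by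
  rw [← PowerSeries.coeff_zero_eq_constantCoeff_apply, PowerSeries.coeff_map]
  simp [genSeries, genFam]

lemma derivative_map_genSeries {R : Type*} [CommSemiring R] (φ : Lam →+* R) (c : ℕ → ℚ) :
    d⁄dX R ((genSeries c).map φ) = (powerSumSeries c).map φ * (genSeries c).map φ := by
  rw [derivative_map, derivative_genSeries, map_mul]

lemma map_powerSumShift_powerSumSeries {c d : ℕ → ℚ} {r : ℚ}
    (h : ∀ n, c (n + 1) * d (n + 1) = r) :
    (powerSumSeries d).map (powerSumShift c : Lam →+* Lam[X]) =
      (powerSumSeries d).map Polynomial.C +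
        PowerSeries.mk fun n => r • Polynomial.X ^ (n + 1) := by
  ext1 n
  simp only [map_add, PowerSeries.coeff_map, powerSumSeries, PowerSeries.coeff_mk, RingHom.coe_coe]
  rw [map_smul, powerSumShift_pp, smul_add, Polynomial.smul_C, smul_smul, mul_comm,
    Nat.succPNat_coe, Nat.succ_eq_add_one, h]

lemma map_powerSumShift_genSeries_of_mul_eq_neg_one {c d : ℕ → ℚ}
    (h : ∀ n, c (n + 1) * d (n + 1) = -1) :
    (genSeries d).map (powerSumShift c : Lam →+* Lam[X]) =
      (1 - PowerSeries.C Polynomial.X * PowerSeries.X) * (genSeries d).map Polynomial.C := by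
  refine eq_one_sub_C_mul_X_mul (derivative_map_genSeries _ d) (derivative_map_genSeries _ d) ?_
    (by simp only [constantCoeff_map_genSeries])
  rw [map_powerSumShift_powerSumSeries h]
  ext1 n
  simp

lemma map_C_genSeries_of_mul_eq_one {c d : ℕ → ℚ} (h : ∀ n, c (n + 1) * d (n + 1) = 1) :
    (genSeries d).map Polynomial.C =
      (1 - PowerSeries.C Polynomial.X * PowerSeries.X) *
        (genSeries d).map (powerSumShift c : Lam →+* Lam[X]) := by
  refine eq_one_sub_C_mul_X_mul (derivative_map_genSeries _ d) (derivative_map_genSeries _ d) ?_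
    (by simp only [constantCoeff_map_genSeries])
  simpa only [one_smul] using map_powerSumShift_powerSumSeries h

/-- The two-variable translation `p_n ↦ p_n + c n • z ^ n + d n • w ^ n`, where `z` is the inner and
`w` the outer variable of `Lam[X][X]`. -/
def powerSumShift₂ (c d : ℕ → ℚ) : Lam →ₐ[ℚ] Lam[X][X] :=
  (Polynomial.mapAlgHom (powerSumShift c)).comp (powerSumShift d)

lemma powerSumShift₂_pp (c d : ℕ → ℚ) (i : ℕ+) :
    powerSumShift₂ c d (pp i) = Polynomial.C (Polynomial.C (pp i)) +
      c i • Polynomial.C (Polynomial.X ^ (i : ℕ)) + d i • Polynomial.X ^ (i : ℕ) := by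
  rw [powerSumShift₂, AlgHom.comp_apply, powerSumShift_pp, map_add, map_smul]
  simp [powerSumShift_pp, ← Polynomial.smul_C]

lemma swap_powerSumShift₂ (c d : ℕ → ℚ) (f : Lam) :
    Polynomial.Bivariate.swap (powerSumShift₂ c d f) = powerSumShift₂ d c f := by
  let swap : Lam[X][X] →ₐ[ℚ] Lam[X][X] := Polynomial.Bivariate.swap.toAlgHom.restrictScalars ℚ
  suffices h : swap.comp (powerSumShift₂ c d) = powerSumShift₂ d c from DFunLike.congr_fun h f
  refine algHom_ext fun i => ?_
  rw [← pp, AlgHom.comp_apply, powerSumShift₂_pp, powerSumShift₂_pp, map_add, map_add, map_smul,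
    map_smul]
  simp [swap, Polynomial.Bivariate.swap_C, Polynomial.Bivariate.swap_Y, add_right_comm]

/-- The coefficient of `z ^ (-n)` of the vertex operator
`exp (∑ c n · p_n zⁿ / n) · exp (-∑ c n · ∂/∂p_n z⁻ⁿ)`. -/
def vertexOp (c : ℕ → ℚ) (n : ℤ) (f : Lam) : Lam :=
  laurentCoeff (genSeries c) n (powerSumShift (-c) f)

/-- The coefficient of `z ^ (-m) * w ^ (-n)` of the normally ordered product of the vertex operators
of `c` at `z` and of `d` at `w`, in which all multiplications stand to the left of all
differentiations. -/
def normalOrdered (c d : ℕ → ℚ) (m n : ℤ) (f : Lam) : Lam :=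
  laurentCoeff (genSeries c) m
    (laurentCoeff ((genSeries d).map Polynomial.C) n (powerSumShift₂ (-c) (-d) f))

lemma normalOrdered_swap (c d : ℕ → ℚ) (m n : ℤ) (f : Lam) :
    normalOrdered c d m n f = normalOrdered d c n m f := by
  rw [normalOrdered, laurentCoeff_laurentCoeff_swap, swap_powerSumShift₂, normalOrdered]

lemma vertexOp_vertexOp (c d : ℕ → ℚ) (m n : ℤ) (f : Lam) :
    vertexOp c m (vertexOp d n f) =
      laurentCoeff (genSeries c) m
        (laurentCoeff ((genSeries d).map (powerSumShift (-c) : Lam →+* Lam[X])) n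
          (powerSumShift₂ (-c) (-d) f)) :=
  congrArg (laurentCoeff (genSeries c) m)
    (map_laurentCoeff (powerSumShift (-c) : Lam →+* Lam[X]) (genSeries d) n _)

lemma vertexOp_vertexOp_of_mul_eq_one {c d : ℕ → ℚ} (h : ∀ n, c (n + 1) * d (n + 1) = 1)
    (m n : ℤ) (f : Lam) :
    vertexOp c m (vertexOp d n f) =
      normalOrdered c d m n f - normalOrdered c d (m - 1) (n + 1) f := by
  rw [vertexOp_vertexOp, map_powerSumShift_genSeries_of_mul_eq_neg_one (by simpa using h),
    laurentCoeff_one_sub_C_mul_X_mul, map_sub, laurentCoeff_X_mul]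
  rfl

lemma vertexOp_vertexOp_sub_of_mul_eq_neg_one {c d : ℕ → ℚ}
    (h : ∀ n, c (n + 1) * d (n + 1) = -1) (m n : ℤ) (f : Lam) :
    vertexOp c m (vertexOp d n f) - vertexOp c (m - 1) (vertexOp d (n + 1) f) =
      normalOrdered c d m n f := by
  rw [normalOrdered, map_C_genSeries_of_mul_eq_one (c := -c) fun k => by simp [h],
    laurentCoeff_one_sub_C_mul_X_mul, map_sub, laurentCoeff_X_mul,
    vertexOp_vertexOp, vertexOp_vertexOp]

theorem vertexOp_vertexOp_add_eq_zero {c d : ℕ → ℚ} (h : ∀ n, c (n + 1) * d (n + 1) = 1)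
    (m n : ℤ) (f : Lam) :
    vertexOp c m (vertexOp d n f) + vertexOp d (n + 1) (vertexOp c (m - 1) f) = 0 := by
  rw [vertexOp_vertexOp_of_mul_eq_one h,
    vertexOp_vertexOp_of_mul_eq_one fun k => by rw [mul_comm, h], normalOrdered_swap d c (n + 1),
    normalOrdered_swap d c (n + 1 - 1), add_sub_cancel_right, sub_add_cancel]
  abel

theorem vertexOp_vertexOp_sub_eq {c d : ℕ → ℚ} (h : ∀ n, c (n + 1) * d (n + 1) = -1)
    (m n : ℤ) (f : Lam) :
    vertexOp c m (vertexOp d n f) - vertexOp c (m - 1) (vertexOp d (n + 1) f) =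
      vertexOp d n (vertexOp c m f) - vertexOp d (n - 1) (vertexOp c (m + 1) f) := by
  rw [vertexOp_vertexOp_sub_of_mul_eq_neg_one h, normalOrdered_swap,
    vertexOp_vertexOp_sub_of_mul_eq_neg_one fun k => by rw [mul_comm, h]]

lemma vertexOp_eq_sum (c : ℕ → ℚ) (n : ℤ) (f : Lam) :
    vertexOp c n f = ∑ j ∈ Finset.range (wbound f + 1),
      coeffInt (genSeries c) (j - n) * Dop (genFam (-c) j) f := by
  rw [vertexOp, laurentCoeff, Polynomial.lsum_apply, Polynomial.sum_over_range' _ (by simp) _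
    (Nat.lt_succ_of_le (natDegree_powerSumShift_le _ f))]
  simp [Dop_genFam]

lemma ee_eq_smul_genFam (k : ℕ) : ee k = (-1 : ℚ) ^ k • genFam (-1) k := by
  rw [← genFam_pow_mul, ee]
  simp [pow_succ]

lemma coeffInt_genSeries_one (n : ℤ) : coeffInt (genSeries 1) n = hZ n := by
  simp only [coeffInt, genSeries, PowerSeries.coeff_mk]
  rfl

lemma coeffInt_genSeries_neg_one {n : ℤ} (hn : 0 ≤ n) :
    coeffInt (genSeries (-1)) n = (-1 : ℚ) ^ n • eZ n := by
  lift n to ℕ using hn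
  simp [coeffInt, eZ, genSeries, ee_eq_smul_genFam, smul_smul, ← mul_pow]

lemma Sop_eq_vertexOp (n : ℤ) : Sop n = vertexOp 1 n := by
  funext f
  rw [vertexOp_eq_sum]
  refine Finset.sum_congr rfl fun j _ => ?_
  rw [coeffInt_genSeries_one, ee_eq_smul_genFam, Dop_smul, mul_smul_comm, smul_smul, ← mul_pow]
  split_ifs with h
  · simp
  · simp [hZ, h]

lemma SstarOp_eq_vertexOp (n : ℤ) : SstarOp n = vertexOp (-1) (-n) := by
  funext f
  rw [vertexOp_eq_sum, neg_neg]
  refine Finset.sum_congr rfl fun j _ => ?_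
  rw [sub_neg_eq_add]
  split_ifs with h
  · rw [coeffInt_genSeries_neg_one (by omega), smul_mul_assoc]
    rfl
  · simp [coeffInt, show ¬ 0 ≤ (j : ℤ) + n by omega]

/-- the quadratic relations satisfied by the components of the vertex
operator `S(z)` and the dual vertex operator `S*(z)`, as ℚ-linear endomorphisms of `Λ`
(stated pointwise):
`S_m S_n + S_{n+1} S_{m−1} = 0`, `S*_m S*_n + S*_{n−1} S*_{m+1} = 0`, and
`S_m S*_n − S_{m−1} S*_{n−1} = S*_n S_m − S*_{n+1} S_{m+1}`. -/
theorem vertex_operator_relations (m n : ℤ) (P : Lam) :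
    Sop m (Sop n P) + Sop (n+1) (Sop (m-1) P) = 0 ∧
    SstarOp m (SstarOp n P) + SstarOp (n-1) (SstarOp (m+1) P) = 0 ∧
    Sop m (SstarOp n P) - Sop (m-1) (SstarOp (n-1) P)
      = SstarOp n (Sop m P) - SstarOp (n+1) (Sop (m+1) P) := by
  simp only [Sop_eq_vertexOp, SstarOp_eq_vertexOp, neg_sub', neg_add', sub_neg_eq_add]
  exact ⟨vertexOp_vertexOp_add_eq_zero (by simp) m n P,
    vertexOp_vertexOp_add_eq_zero (by simp) (-m) (-n) P,
    vertexOp_vertexOp_sub_eq (by simp) m (-n) P⟩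
end
end

section
/- For every partition λ = (λ₁ ≥ λ₂ ≥ … ≥ λ_l ≥ 0), applying the vertex operator components to the vacuum vector 1 ∈ Λ gives the Schur function: S_{−λ₁} S_{−λ₂} ⋯ S_{−λ_l}(1) = det(h_{λ_i−i+j})_{1≤i,j≤l} = s_λ. -/
/-!
The operators `(-1)^j e_j(∂)` have generating function `exp (-∑ uⁿ ∂/∂p_n)`, which by Taylor's
formula is the translation `p_n ↦ p_n - uⁿ`, a homomorphism of algebras `Λ → Λ[u]`: the chain rule
for `d/du` gives its coefficients the same recursion as differentiating the exponential. Hence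
`S_n P` is the image of the translated `P` under the `Λ`-linear substitution `u^j ↦ h_{j-n}`.

The translation multiplies `∑ h_k t^k` by `1 - ut`, so it sends `s_ρ` to
`det (h_{ρ_i-i+j} - u h_{ρ_i-i+j-1})`. By column operations this is the determinant of the
Jacobi–Trudi matrix of `(m, ρ)` with its first row replaced by `1, u, …, u^l`. The substitution
`u^j ↦ h_{m+j}` restores the first row, so `S_{-m} s_ρ = s_{(m, ρ)}` for every integer `m` and every
integer tuple `ρ`, whether or not `(m, ρ)` is a partition.
-/

open MvPolynomial

noncomputable section

open scoped Polynomial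

section SubstitutionOfCommutingElements

variable {σ R A : Type*} [CommSemiring R] [Semiring A] [Algebra R A]

open scoped IsMulCommutative in
/-- Evaluation of polynomials at a family of pairwise commuting elements of an algebra that need
not be commutative; it factors through the commutative subalgebra generated by the family. -/
def aevalOfCommute (b : σ → A) (hb : ∀ i j, Commute (b i) (b j)) : MvPolynomial σ R →ₐ[R] A :=
  have : IsMulCommutative (Algebra.adjoin R (Set.range b)) :=
    Algebra.isMulCommutative_adjoin R (by rintro _ ⟨i, rfl⟩ _ ⟨j, rfl⟩; exact hb i j)
  (Algebra.adjoin R (Set.range b)).val.comp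
    (aeval fun i => ⟨b i, Algebra.subset_adjoin (Set.mem_range_self i)⟩)

lemma aevalOfCommute_X (b : σ → A) (hb : ∀ i j, Commute (b i) (b j)) (i : σ) :
    aevalOfCommute (R := R) b hb (X i) = b i := by
  simp [aevalOfCommute]

end SubstitutionOfCommutingElements

section ChainRule

variable {σ R A M : Type*} [CommSemiring R] [CommSemiring A] [Algebra R A]
  [AddCommMonoid M] [Module R M] [Module A M]

lemma derivation_aeval_eq_sum_pderiv (D : Derivation R A M) (f : σ → A) {S : Finset σ}
    {P : MvPolynomial σ R} (hP : P.vars ⊆ S) :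
    D (aeval f P) = ∑ i ∈ S, aeval f (pderiv i P) • D (f i) := by
  classical
  have hP' : P ∈ Algebra.adjoin R (X '' (S : Set σ)) := mem_supported.2 (mod_cast hP)
  clear hP
  induction hP' using Algebra.adjoin_induction with
  | mem _ hx =>
    obtain ⟨j, hj, rfl⟩ := hx
    simp [pderiv_X, Pi.single_apply, apply_ite, Finset.mem_coe.1 hj]
  | algebraMap r => simp [algebraMap_eq]
  | add P Q _ _ ihP ihQ => simp only [map_add, ihP, ihQ, add_smul, Finset.sum_add_distrib]
  | mul P Q _ _ ihP ihQ =>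
    simp only [map_mul, map_add, Derivation.leibniz, smul_eq_mul, ihP, ihQ, add_smul, mul_smul,
      Finset.smul_sum, Finset.sum_add_distrib]

end ChainRule

lemma natDegree_aeval_le_weightedTotalDegree {σ R A : Type*} [CommSemiring R] [CommSemiring A]
    [Algebra R A] {f : σ → A[X]} {w : σ → ℕ} (hf : ∀ i, (f i).natDegree ≤ w i)
    (P : MvPolynomial σ R) : (aeval f P).natDegree ≤ P.weightedTotalDegree w := by
  rw [aeval_def, eval₂_eq]
  refine Polynomial.natDegree_sum_le_of_forall_le _ _ fun α hα => ?_
  calc (algebraMap R A[X] (P.coeff α) * ∏ i ∈ α.support, f i ^ α i).natDegree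
      ≤ (∏ i ∈ α.support, f i ^ α i).natDegree := Polynomial.natDegree_C_mul_le _ _
    _ ≤ ∑ i ∈ α.support, (f i ^ α i).natDegree := Polynomial.natDegree_prod_le _ _
    _ ≤ ∑ i ∈ α.support, α i * w i := Finset.sum_le_sum fun i _ =>
        Polynomial.natDegree_pow_le_of_le _ (hf i)
    _ = Finsupp.weight w α := by simp [Finsupp.weight_apply, Finsupp.sum]
    _ ≤ P.weightedTotalDegree w := le_weightedTotalDegree w hα

section Recursion

variable {M : Type*} [AddCommGroup M] [Module ℚ M]

lemma eq_of_succ_smul_eq_sum {a : ℕ → M → M} {f g : ℕ → M} (h₀ : f 0 = g 0)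
    (hf : ∀ k : ℕ, ((k : ℚ) + 1) • f (k + 1) = ∑ i ∈ Finset.range (k + 1), a i (f (k - i)))
    (hg : ∀ k : ℕ, ((k : ℚ) + 1) • g (k + 1) = ∑ i ∈ Finset.range (k + 1), a i (g (k - i))) :
    f = g := by
  funext k
  induction k using Nat.strong_induction_on with
  | _ k ih =>
    cases k with
    | zero => exact h₀
    | succ k =>
      have hk : (k : ℚ) + 1 ≠ 0 := by positivity
      refine smul_right_injective M hk ?_
      simp only [hf, hg]
      exact Finset.sum_congr rfl fun i _ => by rw [ih (k - i) (by omega)]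

end Recursion

lemma genFam_zero (c : ℕ → ℚ) : genFam c 0 = 1 := by
  rw [genFam]

lemma succ_smul_genFam_succ (c : ℕ → ℚ) (k : ℕ) :
    ((k : ℚ) + 1) • genFam c (k + 1) =
      ∑ i ∈ Finset.range (k + 1), c (i + 1) • (X i.succPNat * genFam c (k - i)) := by
  have hk : (k : ℚ) + 1 ≠ 0 := by positivity
  rw [genFam, smul_inv_smul₀ hk]
  rfl

lemma pow_smul_genFam (r : ℚ) (c : ℕ → ℚ) (k : ℕ) :
    r ^ k • genFam c k = genFam (fun n => r ^ n * c n) k := by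
  refine congrFun (eq_of_succ_smul_eq_sum (f := fun k => r ^ k • genFam c k)
    (a := fun i Q => (r ^ (i + 1) * c (i + 1)) • (X i.succPNat * Q)) ?_ (fun k => ?_)
    (succ_smul_genFam_succ _)) k
  · simp [genFam_zero]
  · rw [smul_comm, succ_smul_genFam_succ, Finset.smul_sum]
    refine Finset.sum_congr rfl fun i hi => ?_
    have hik : k + 1 = i + 1 + (k - i) := by grind
    rw [hik, pow_add, mul_smul_comm, smul_smul, smul_smul, mul_right_comm]

lemma neg_one_pow_smul_ee (k : ℕ) : (-1 : ℚ) ^ k • ee k = genFam (fun _ => -1) k := by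
  rw [ee, pow_smul_genFam]
  congr 1
  funext n
  rw [← pow_add, Odd.neg_one_pow ⟨n, by ring⟩]

lemma hZ_natCast (k : ℕ) : hZ k = hh k := by simp [hZ]

lemma hZ_of_neg {k : ℤ} (hk : k < 0) : hZ k = 0 := by simp [hZ, hk]

lemma sum_X_mul_hZ {k : ℤ} {N : ℕ} (hN : k ≤ N) :
    ∑ i ∈ Finset.range N, X i.succPNat * hZ (k - 1 - i) = (k : ℚ) • hZ k := by
  have hvanish : ∀ i : ℕ, k ≤ i → X i.succPNat * hZ (k - 1 - i) = 0 := fun i hi => by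
    rw [hZ_of_neg (by omega), mul_zero]
  rcases lt_or_ge 0 k with hk | hk
  · obtain ⟨m, rfl⟩ : ∃ m : ℕ, k = (m + 1 : ℕ) := ⟨(k - 1).toNat, by omega⟩
    calc ∑ i ∈ Finset.range N, X i.succPNat * hZ ((m + 1 : ℕ) - 1 - i)
        = ∑ i ∈ Finset.range (m + 1), X i.succPNat * hZ ((m + 1 : ℕ) - 1 - i) := by
          refine (Finset.sum_subset (Finset.range_mono (mod_cast hN)) fun i _ hi => ?_).symm
          exact hvanish i (by simpa using hi)
      _ = ∑ i ∈ Finset.range (m + 1), X i.succPNat * hh (m - i) := by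
          refine Finset.sum_congr rfl fun i hi => ?_
          rw [← hZ_natCast, Nat.cast_sub (Finset.mem_range_succ_iff.1 hi)]
          push_cast
          ring_nf
      _ = ((m + 1 : ℕ) : ℚ) • hZ (m + 1 : ℕ) := by
          rw [hZ_natCast, hh, Nat.cast_succ, succ_smul_genFam_succ]
          simp only [one_smul]
  · have hzero : (k : ℚ) • hZ k = 0 := by
      rcases hk.lt_or_eq with hk | rfl
      · rw [hZ_of_neg hk, smul_zero]
      · simp
    rw [hzero]
    exact Finset.sum_eq_zero fun i _ => hvanish i (by omega)

/-- The operator `b_n = n·∂/∂p_n`. -/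
def bop (n : ℕ+) : Module.End ℚ Lam := ((n : ℕ) : ℚ) • (pderiv n).toLinearMap

lemma bop_apply (n : ℕ+) (P : Lam) : bop n P = ((n : ℕ) : ℚ) • pderiv n P := rfl

lemma pderiv_pderiv_comm {σ R : Type*} [CommSemiring R] (i j : σ) (P : MvPolynomial σ R) :
    pderiv i (pderiv j P) = pderiv j (pderiv i P) := by
  classical
  ext m
  rcases eq_or_ne i j with rfl | hij
  · rfl
  simp [coeff_pderiv, add_right_comm m, hij, hij.symm, mul_right_comm]

lemma commute_bop (m n : ℕ+) : Commute (bop m) (bop n) :=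
  LinearMap.ext fun P => by
    simp only [Module.End.mul_apply, bop_apply, map_smul, pderiv_pderiv_comm m n,
      smul_comm ((m : ℕ) : ℚ)]

/-- The substitution `f ↦ f(∂)` of `b_n` for `p_n`, as a homomorphism of algebras. -/
def diffOp : Lam →ₐ[ℚ] Module.End ℚ Lam := aevalOfCommute bop commute_bop

lemma diffOp_X (n : ℕ+) : diffOp (X n) = bop n := aevalOfCommute_X bop commute_bop n

lemma diffOp_monomial_one (α : ℕ+ →₀ ℕ) : diffOp (monomial α 1) = monOp α := by
  have hprod : (monomial α 1 : Lam) = ((α.support.sort (· ≤ ·)).map fun i => X i ^ α i).prod := by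
    rw [monomial_eq, C_1, one_mul, Finsupp.prod, ← List.prod_toFinset _ (Finset.sort_nodup _ _),
      Finset.sort_toFinset]
  rw [hprod, map_list_prod, List.map_map, monOp]
  congr 2
  funext i
  rw [Function.comp_apply, map_pow, diffOp_X, bop]

lemma Dop_eq_diffOp (f P : Lam) : Dop f P = diffOp f P := by
  conv_rhs => rw [f.as_sum]
  rw [map_sum, LinearMap.sum_apply, Dop]
  refine Finset.sum_congr rfl fun α _ => ?_
  rw [← diffOp_monomial_one, ← LinearMap.smul_apply, ← map_smul, smul_monomial, smul_eq_mul,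
    mul_one]

lemma succ_smul_diffOp_genFam_succ (c : ℕ → ℚ) (k : ℕ) (P : Lam) :
    ((k : ℚ) + 1) • diffOp (genFam c (k + 1)) P =
      ∑ i ∈ Finset.range (k + 1), c (i + 1) • diffOp (genFam c (k - i)) (bop i.succPNat P) := by
  rw [← LinearMap.smul_apply, ← map_smul, succ_smul_genFam_succ, map_sum, LinearMap.sum_apply]
  refine Finset.sum_congr rfl fun i _ => ?_
  rw [mul_comm, map_smul, map_mul, diffOp_X, LinearMap.smul_apply, Module.End.mul_apply]

section Translation

variable (c : ℕ → ℚ)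

/-- The translation `p_n ↦ p_n + c_n uⁿ`, as a homomorphism of algebras `Λ → Λ[u]`. -/
def shift : Lam →ₐ[ℚ] Lam[X] :=
  aeval fun n : ℕ+ => Polynomial.C (X n) + c n • Polynomial.X ^ (n : ℕ)

lemma shift_X (n : ℕ+) : shift c (X n) = Polynomial.C (X n) + c n • Polynomial.X ^ (n : ℕ) :=
  aeval_X _ n

lemma natDegree_shift_le (P : Lam) : (shift c P).natDegree ≤ wbound P := by
  have hX (n : ℕ+) :
      (Polynomial.C (X n : Lam) + c n • Polynomial.X ^ (n : ℕ)).natDegree ≤ (n : ℕ) := by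
    refine Polynomial.natDegree_add_le_of_degree_le (by simp) ?_
    exact (Polynomial.natDegree_smul_le _ _).trans (Polynomial.natDegree_X_pow_le _)
  refine (natDegree_aeval_le_weightedTotalDegree hX P).trans_eq ?_
  simp only [weightedTotalDegree, Finsupp.weight_apply, smul_eq_mul, mul_comm, wbound]

lemma coeff_shift_zero (P : Lam) : (shift c P).coeff 0 = P := by
  have h : ((Polynomial.aeval (0 : Lam)).restrictScalars ℚ).comp (shift c) = AlgHom.id ℚ Lam :=
    algHom_ext fun n => by simp [shift_X]
  rw [Polynomial.coeff_zero_eq_aeval_zero]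
  exact DFunLike.congr_fun h P

lemma derivative_shift {S : Finset ℕ+} {P : Lam} (hP : P.vars ⊆ S) :
    Polynomial.derivative (shift c P) =
      ∑ n ∈ S, c n • (shift c (bop n P) * Polynomial.X ^ ((n : ℕ) - 1)) := by
  refine (derivation_aeval_eq_sum_pderiv (Polynomial.derivative'.restrictScalars ℚ) _ hP).trans
    (Finset.sum_congr rfl fun n _ => ?_)
  have hX : Polynomial.derivative (Polynomial.C (X n : Lam) + c n • Polynomial.X ^ (n : ℕ)) =
      c n • ((n : ℕ) : ℚ) • Polynomial.X ^ ((n : ℕ) - 1) := by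
    simp [Polynomial.derivative_X_pow, Nat.cast_smul_eq_nsmul]
  change shift c (pderiv n P) • Polynomial.derivative _ = _
  rw [hX, bop_apply, map_smul, smul_mul_assoc, smul_eq_mul, mul_smul_comm, mul_smul_comm]

lemma succ_smul_coeff_shift_succ (k : ℕ) (P : Lam) :
    ((k : ℚ) + 1) • (shift c P).coeff (k + 1) =
      ∑ i ∈ Finset.range (k + 1), c (i + 1) • (shift c (bop i.succPNat P)).coeff (k - i) := by
  classical
  let I : Finset ℕ+ := (Finset.range (k + 1)).image Nat.succPNat
  have hvanish (n : ℕ+) (hn : n ∉ I) :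
      (c n • (shift c (bop n P) * Polynomial.X ^ ((n : ℕ) - 1))).coeff k = 0 := by
    have hkn : ¬ (n : ℕ) - 1 ≤ k := fun h =>
      hn (Finset.mem_image.2 ⟨n.natPred, by simpa [PNat.natPred] using h, n.succPNat_natPred⟩)
    rw [Polynomial.coeff_smul, Polynomial.coeff_mul_X_pow', if_neg hkn, smul_zero]
  calc ((k : ℚ) + 1) • (shift c P).coeff (k + 1)
      = (Polynomial.derivative (shift c P)).coeff k := by
        rw [Polynomial.coeff_derivative, mul_comm, Algebra.smul_def]
        simp
    _ = ∑ n ∈ P.vars ∪ I, (c n • (shift c (bop n P) * Polynomial.X ^ ((n : ℕ) - 1))).coeff k := by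
        rw [derivative_shift c Finset.subset_union_left, Polynomial.finsetSum_coeff]
    _ = ∑ n ∈ I, (c n • (shift c (bop n P) * Polynomial.X ^ ((n : ℕ) - 1))).coeff k :=
        (Finset.sum_subset Finset.subset_union_right fun n _ hn => hvanish n hn).symm
    _ = ∑ i ∈ Finset.range (k + 1), c (i + 1) • (shift c (bop i.succPNat P)).coeff (k - i) := by
        rw [Finset.sum_image Nat.succPNat_injective.injOn]
        refine Finset.sum_congr rfl fun i hi => ?_
        rw [Polynomial.coeff_smul, Polynomial.coeff_mul_X_pow', Nat.succPNat_coe,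
          Nat.succ_sub_one, if_pos (Finset.mem_range_succ_iff.1 hi)]

lemma coeff_shift (k : ℕ) (P : Lam) : (shift c P).coeff k = diffOp (genFam c k) P := by
  refine congrFun (congrFun (eq_of_succ_smul_eq_sum (f := fun k P => (shift c P).coeff k)
    (g := fun k P => diffOp (genFam c k) P)
    (a := fun i φ P => c (i + 1) • φ (bop i.succPNat P)) ?_ (fun k => ?_) fun k => ?_) k) P
  · funext P
    simp [coeff_shift_zero, genFam_zero]
  · funext P
    simpa using succ_smul_coeff_shift_succ c k P
  · funext P
    simpa using succ_smul_diffOp_genFam_succ c k P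

end Translation

lemma sum_shift_neg_one_X_mul (k : ℕ) :
    ∑ i ∈ Finset.range (k + 1), shift (fun _ => -1) (X i.succPNat) *
        (Polynomial.C (hZ (k - i)) - Polynomial.X * Polynomial.C (hZ (k - i - 1))) =
      ((k : ℚ) + 1) • (Polynomial.C (hZ (k + 1)) - Polynomial.X * Polynomial.C (hZ k)) := by
  have hterm (i : ℕ) :
      shift (fun _ => -1) (X i.succPNat) *
        (Polynomial.C (hZ (k - i)) - Polynomial.X * Polynomial.C (hZ (k - i - 1))) =
      Polynomial.C (X i.succPNat * hZ ((k + 1 : ℤ) - 1 - i)) -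
        Polynomial.X * Polynomial.C (X i.succPNat * hZ (k - 1 - i)) -
        (Polynomial.X ^ (i + 1) * Polynomial.C (hZ (k - i)) -
          Polynomial.X ^ (i + 1 + 1) * Polynomial.C (hZ (k - (i + 1 : ℕ)))) := by
    have hki : (k : ℤ) - i - 1 = k - 1 - i := by ring
    have hki' : (k : ℤ) - (i + 1 : ℕ) = k - 1 - i := by push_cast; ring
    rw [shift_X, hki, hki', add_sub_cancel_right, map_mul, map_mul, Nat.succPNat_coe,
      Nat.succ_eq_add_one]
    simp only [neg_smul, one_smul]
    ring
  rw [Finset.sum_congr rfl fun i _ => hterm i, Finset.sum_sub_distrib, Finset.sum_sub_distrib,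
    ← Finset.mul_sum, ← map_sum, ← map_sum, sum_X_mul_hZ (by simp), sum_X_mul_hZ (by simp),
    Finset.sum_range_sub' (fun i => Polynomial.X ^ (i + 1) * Polynomial.C (hZ (k - i))),
    hZ_of_neg (k := k - (k + 1 : ℕ)) (by omega), map_zero, mul_zero, sub_zero, zero_add, pow_one,
    Nat.cast_zero, sub_zero, ← Polynomial.smul_C, ← Polynomial.smul_C, mul_smul_comm]
  push_cast
  module

/-- Generating-function form: translation by `-1` multiplies `∑ h_k t^k` by `1 - ut`. -/
lemma shift_neg_one_hZ (k : ℤ) :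
    shift (fun _ => -1) (hZ k) =
      Polynomial.C (hZ k) - Polynomial.X * Polynomial.C (hZ (k - 1)) := by
  rcases lt_or_ge k 0 with hk | hk
  · simp [hZ_of_neg hk, hZ_of_neg (show k - 1 < 0 by omega)]
  lift k to ℕ using hk with m
  refine congrFun (eq_of_succ_smul_eq_sum (f := fun k : ℕ => shift (fun _ => -1) (hZ k))
    (g := fun k : ℕ => Polynomial.C (hZ k) - Polynomial.X * Polynomial.C (hZ (k - 1)))
    (a := fun i Q => shift (fun _ => -1) (X i.succPNat) * Q) ?_ (fun k => ?_) fun k => ?_) m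
  · simp [hZ, hh, genFam_zero]
  · simp only [hZ_natCast, ← map_smul, hh, succ_smul_genFam_succ, map_sum, one_smul, map_mul]
  · rw [Nat.cast_succ, add_sub_cancel_right, ← sum_shift_neg_one_X_mul]
    exact Finset.sum_congr rfl fun i hi => by
      rw [Nat.cast_sub (Finset.mem_range_succ_iff.1 hi)]

/-- The `Λ`-linear substitution `u^j ↦ h_{j-n}` in polynomials in `u`, which turns the generating
function of the operators `(-1)^j e_j(∂)` into `S_n`. -/
def substH (n : ℤ) : Lam[X] →ₗ[Lam] Lam :=
  Polynomial.lsum fun j => LinearMap.toSpanSingleton Lam Lam (hZ (j - n))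

lemma substH_C_mul_X_pow (n : ℤ) (a : Lam) (j : ℕ) :
    substH n (Polynomial.C a * Polynomial.X ^ j) = a * hZ (j - n) := by
  simp [substH, Polynomial.C_mul_X_pow_eq_monomial, Polynomial.sum_monomial_index]

lemma Sop_eq_substH_shift (n : ℤ) (P : Lam) :
    Sop n P = substH n (shift (fun _ => -1) P) := by
  have hdeg := Nat.lt_succ_of_le (natDegree_shift_le (fun _ => -1) P)
  rw [substH, Polynomial.lsum_apply, Polynomial.sum_over_range' _ (by simp) _ hdeg, Sop]
  refine Finset.sum_congr rfl fun j _ => ?_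
  rw [coeff_shift, ← neg_one_pow_smul_ee, map_smul, LinearMap.smul_apply, ← Dop_eq_diffOp,
    LinearMap.toSpanSingleton_apply, smul_eq_mul, smul_mul_assoc, mul_comm]
  split_ifs with h
  · rfl
  · rw [hZ_of_neg (by omega), mul_zero, smul_zero]

section Determinant

variable {R : Type*} [CommRing R] {l : ℕ}

/-- Both sides are the determinant of `N` with the row `1, x, …, x^l` put on top: subtracting from
each column `x` times its left neighbour reduces that row to `1, 0, …, 0`. -/
lemma det_sub_mul_eq_sum_det_submatrix (N : Matrix (Fin l) (Fin (l + 1)) R) (x : R) :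
    (Matrix.of fun i j : Fin l => N i j.succ - x * N i j.castSucc).det =
      ∑ j : Fin (l + 1), (-1) ^ (j : ℕ) * x ^ (j : ℕ) * (N.submatrix id j.succAbove).det := by
  let A : Matrix (Fin (l + 1)) (Fin (l + 1)) R :=
    Matrix.of (Fin.cons (fun j => x ^ (j : ℕ)) N)
  let B : Matrix (Fin (l + 1)) (Fin (l + 1)) R :=
    Matrix.of fun i => Fin.cons (A i 0) fun j => A i j.succ - x * A i j.castSucc
  have hB₀ (j : Fin l) : B 0 j.succ = 0 := by
    change x ^ ((j : ℕ) + 1) - x * x ^ (j : ℕ) = 0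
    ring
  calc (Matrix.of fun i j : Fin l => N i j.succ - x * N i j.castSucc).det
      = (B.submatrix Fin.succ (Fin.succAbove 0)).det := rfl
    _ = B.det := by
        rw [Matrix.det_succ_row_zero B, Fin.sum_univ_succ, Finset.sum_eq_zero fun j _ => by
          rw [hB₀, mul_zero, zero_mul]]
        have hB₀₀ : B 0 0 = 1 := pow_zero x
        rw [hB₀₀, Fin.val_zero, pow_zero, one_mul, one_mul, add_zero]
    _ = A.det := (Matrix.det_eq_of_forall_col_eq_smul_add_pred (A := A) (B := B) (fun _ => x)
        (fun i => rfl) fun i j => by simp [B]).symm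
    _ = ∑ j : Fin (l + 1), (-1) ^ (j : ℕ) * x ^ (j : ℕ) * (N.submatrix id j.succAbove).det :=
        Matrix.det_succ_row_zero A

end Determinant

/-- The `l × (l+1)` matrix `(h_{ρ_i-i+j-1})` (indices from `0`), which is the Jacobi–Trudi matrix of
`(m, ρ)` without its first row, for every `m`. Its last `l` columns form that of `ρ`. -/
def jacobiTrudiTail {l : ℕ} (ρ : Fin l → ℤ) : Matrix (Fin l) (Fin (l + 1)) Lam :=
  Matrix.of fun i j => hZ (ρ i - i.1 - 1 + j.1)

lemma shift_neg_one_schur {l : ℕ} (ρ : Fin l → ℤ) :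
    shift (fun _ => -1) (schur ρ) =
      ∑ j : Fin (l + 1), Polynomial.C ((-1) ^ (j : ℕ) *
        ((jacobiTrudiTail ρ).submatrix id j.succAbove).det) * Polynomial.X ^ (j : ℕ) := by
  have hmat : (shift fun _ => -1).mapMatrix (Matrix.of fun i j : Fin l => hZ (ρ i - i.1 + j.1)) =
      Matrix.of fun i j : Fin l => (jacobiTrudiTail ρ).map Polynomial.C i j.succ -
        Polynomial.X * (jacobiTrudiTail ρ).map Polynomial.C i j.castSucc := by
    ext1 i j
    have hj : ρ i - i.1 - 1 + (j.1 + 1 : ℕ) = ρ i - i.1 + j.1 := by push_cast; ring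
    have hj' : ρ i - i.1 - 1 + j.1 = ρ i - i.1 + j.1 - 1 := by ring
    simp only [AlgHom.mapMatrix_apply, Matrix.map_apply, Matrix.of_apply, jacobiTrudiTail,
      shift_neg_one_hZ, Fin.val_succ, Fin.val_castSucc, hj, hj']
  rw [schur, AlgHom.map_det, hmat, det_sub_mul_eq_sum_det_submatrix]
  refine Finset.sum_congr rfl fun j _ => ?_
  rw [Matrix.submatrix_map, ← RingHom.mapMatrix_apply, ← RingHom.map_det]
  simp only [map_mul, map_pow, map_neg, map_one]
  ring

lemma Sop_neg_schur {l : ℕ} (m : ℤ) (ρ : Fin l → ℤ) :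
    Sop (-m) (schur ρ) = schur (Fin.cons m ρ : Fin (l + 1) → ℤ) := by
  rw [Sop_eq_substH_shift, shift_neg_one_schur, map_sum, schur, Matrix.det_succ_row_zero]
  refine Finset.sum_congr rfl fun j _ => ?_
  have hrow : hZ (j - -m) = hZ ((Fin.cons m ρ : Fin (l + 1) → ℤ) 0 - (0 : Fin (l + 1)).1 + j) := by
    simp [add_comm]
  have hminor : (jacobiTrudiTail ρ).submatrix id j.succAbove =
      (Matrix.of fun i k : Fin (l + 1) =>
        hZ ((Fin.cons m ρ : Fin (l + 1) → ℤ) i - i.1 + k.1)).submatrix Fin.succ j.succAbove := by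
    ext1 i k
    simp only [jacobiTrudiTail, Matrix.submatrix_apply, Matrix.of_apply, id, Fin.cons_succ,
      Fin.val_succ, Nat.cast_succ, sub_sub]
  rw [substH_C_mul_X_pow, hminor, hrow, mul_right_comm, Matrix.of_apply]

theorem vertex_operators_vacuum_eq_schur_general {l : ℕ} (ρ : Fin l → ℤ) :
    (List.ofFn fun i => -ρ i).foldr Sop 1 = schur ρ := by
  induction ρ using Fin.consInduction with
  | elim0 => simp [schur]
  | cons m ρ ih =>
    rw [List.ofFn_succ, List.foldr_cons]
    simp only [Fin.cons_zero, Fin.cons_succ, ih, Sop_neg_schur]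

/-- for every partition `λ = (λ₁ ≥ λ₂ ≥ … ≥ λ_l ≥ 0)`, applying the vertex
operator components to the vacuum vector `1 ∈ Λ` gives the Schur function:
`S_{−λ₁} S_{−λ₂} ⋯ S_{−λ_l} (1) = det (h_{λ_i − i + j})_{1≤i,j≤l} = s_λ`. -/
theorem vertex_operators_vacuum_eq_schur (l : ℕ) (lam : Fin l → ℕ) (hlam : Antitone lam) :
    (List.ofFn fun i => -(lam i : ℤ)).foldr Sop 1 = schur fun i => (lam i : ℤ) :=
  vertex_operators_vacuum_eq_schur_general fun i => (lam i : ℤ)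
end
end

section
/- Jacobi–Trudi identity (equivalence of the Weyl character formula and the determinant of complete homogeneous polynomials): let n ≥ 1 and let λ be a partition with at most n parts, padded with zeros to length n, and δ = (n−1, n−2, …, 1, 0). Then in ℤ[x₁,…,x_n]: ∑_{σ∈S_n} sgn(σ) ∏_{i=1}^n x_i^{(λ+δ)_{σ(i)}} = det( h_{λ_i−i+j}(x₁,…,x_n) )_{1≤i,j≤n} · ∏_{1≤i<j≤n}(x_i − x_j). -/
/-!
Let `x_l` be the variables and `H(t) = ∑ h_r t^r = ∏_l 1 / (1 - x_l t)`. The polynomial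
`E_k(t) = ∏_{l ≠ k} (1 - x_l t)` has degree less than `n`, and `E_k(t) H(t) = 1 / (1 - x_k t)`.
Comparing coefficients of `t^a` gives `x_k^a = ∑_{m < n} h_{a - m} [t^m] E_k` for every `a ≥ 0`.

Hence, for any exponents `a_i`, the matrix `(x_k^{a_i})_{i,k}` is the product of the matrix with
entries `h_{a_i - (n - 1 - j)}` and the matrix `C` with entries `[t^{n-1-j}] E_k`, and `C` does not
depend on `a`. For `a = δ` the first factor is upper unitriangular, so `det C` is the Vandermonde
determinant. Taking determinants for `a = λ + δ` gives the identity.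
-/

open MvPolynomial

noncomputable section

/-- The complete homogeneous symmetric polynomial `h_k (x₁, …, x_n)`: the sum of all
monomials of degree `k` in the variables `x₁, …, x_n`. -/
def hfin (n k : ℕ) : MvPolynomial (Fin n) ℤ :=
  ∑ s : Sym (Fin n) k, (s.1.map X).prod

/-- `h` indexed by `ℤ` (zero for negative degrees). -/
def hfinZ (n : ℕ) (k : ℤ) : MvPolynomial (Fin n) ℤ :=
  if 0 ≤ k then hfin n k.toNat else 0

section ReciprocalProducts

variable {ι A : Type*} [CommRing A]

lemma mk_pow_mul_one_sub_C_mul_X (x : A) :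
    PowerSeries.mk (x ^ ·) * (1 - PowerSeries.C x * PowerSeries.X) = 1 := by
  have hmk : PowerSeries.mk (x ^ ·) = PowerSeries.rescale x (PowerSeries.mk 1) := by
    ext
    simp
  rw [hmk, ← PowerSeries.rescale_X, ← map_one (PowerSeries.rescale x), ← map_sub, ← map_mul,
    PowerSeries.mk_one_mul_one_sub_eq_one]

/-- The polynomial `∏_{l ∈ s} (1 - x_l t)` in `t`, which for `s` the complement of `k` is the
polynomial `E_k` of the proof. -/
def prodOneSub (s : Finset ι) (x : ι → A) : Polynomial A :=
  ∏ l ∈ s, (1 - Polynomial.C (x l) * Polynomial.X)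

lemma natDegree_prodOneSub_le (s : Finset ι) (x : ι → A) :
    (prodOneSub s x).natDegree ≤ s.card := by
  rw [Finset.card_eq_sum_ones]
  refine (Polynomial.natDegree_prod_le _ _).trans (Finset.sum_le_sum fun l _ => ?_)
  compute_degree

lemma prodOneSub_mul_prod_mk_pow (s : Finset ι) (x : ι → A) :
    (prodOneSub s x : PowerSeries A) * ∏ l ∈ s, PowerSeries.mk (x l ^ ·) = 1 := by
  have hcoe : (prodOneSub s x : PowerSeries A)
      = ∏ l ∈ s, (1 - PowerSeries.C (x l) * PowerSeries.X) := by
    rw [prodOneSub, ← Polynomial.coeToPowerSeries.ringHom_apply, map_prod]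
    simp
  rw [hcoe, mul_comm, ← Finset.prod_mul_distrib]
  exact Finset.prod_eq_one fun l _ => mk_pow_mul_one_sub_C_mul_X (x l)

lemma prodOneSub_erase_mul_prod_mk_pow [DecidableEq ι] {s : Finset ι} {k : ι} (hk : k ∈ s)
    (x : ι → A) :
    (prodOneSub (s.erase k) x : PowerSeries A) * ∏ l ∈ s, PowerSeries.mk (x l ^ ·)
      = PowerSeries.mk (x k ^ ·) := by
  rw [← Finset.prod_erase_mul _ _ hk, ← mul_assoc, prodOneSub_mul_prod_mk_pow, one_mul]

end ReciprocalProducts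

section CompleteHomogeneous

variable (σ R : Type*) [Fintype σ] [DecidableEq σ]

lemma mk_hsymm_eq_prod_mk_pow [CommSemiring R] :
    PowerSeries.mk (hsymm σ R) = ∏ l, PowerSeries.mk ((X l : MvPolynomial σ R) ^ ·) := by
  ext1 r
  -- Multisets of size `r` correspond to exponent vectors of total degree `r`.
  have hmem (f : σ →₀ ℕ) : f ∈ Finset.univ.finsuppAntidiag r ↔ (f.sum fun _ => id) = r := by
    rw [Finset.mem_finsuppAntidiag']
    simp [Function.id_def]
  have hmonomial (s : Sym σ r) :
      (s.1.map X).prod = ∏ l, (X l : MvPolynomial σ R) ^ s.1.count l := by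
    rw [Finset.prod_multiset_map_count]
    refine Finset.prod_subset (Finset.subset_univ _) fun l _ hl => ?_
    rw [Multiset.count_eq_zero_of_notMem (by simpa using hl), pow_zero]
  let _ := Fintype.subtype _ hmem
  simp only [PowerSeries.coeff_prod, PowerSeries.coeff_mk, hsymm, hmonomial]
  rw [Finset.sum_subtype _ hmem]
  exact Fintype.sum_equiv (Sym.equivNatSum σ r) _ _ fun s => by simp

/-- The complete homogeneous symmetric polynomial `h_r` indexed by an integer `r`, zero for
`r < 0`. -/
def hsymmInt [CommSemiring R] (r : ℤ) : MvPolynomial σ R :=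
  if 0 ≤ r then hsymm σ R r.toNat else 0

lemma hsymmInt_natCast_sub [CommSemiring R] (a m : ℕ) :
    hsymmInt σ R ((a : ℤ) - m) = if m ≤ a then hsymm σ R (a - m) else 0 := by
  simp only [hsymmInt, sub_nonneg, Nat.cast_le, Int.toNat_sub]

variable {σ R}

lemma coeff_mul_mk_hsymm [CommSemiring R] {P : Polynomial (MvPolynomial σ R)} {N : ℕ}
    (hP : P.natDegree < N) (a : ℕ) :
    PowerSeries.coeff a ((P : PowerSeries (MvPolynomial σ R)) * PowerSeries.mk (hsymm σ R))
      = ∑ m ∈ Finset.range N, hsymmInt σ R ((a : ℤ) - m) * P.coeff m := by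
  have hcoe : (P : PowerSeries (MvPolynomial σ R))
      = ∑ m ∈ Finset.range N, PowerSeries.C (P.coeff m) * PowerSeries.X ^ m := by
    conv_lhs => rw [P.as_sum_range_C_mul_X_pow' hP]
    rw [← Polynomial.coeToPowerSeries.ringHom_apply, map_sum]
    simp
  rw [hcoe, Finset.sum_mul, map_sum]
  refine Finset.sum_congr rfl fun m _ => ?_
  rw [mul_assoc, PowerSeries.coeff_C_mul, PowerSeries.coeff_X_pow_mul', PowerSeries.coeff_mk,
    hsymmInt_natCast_sub, mul_comm]

lemma sum_hsymmInt_mul_coeff [CommRing R] (k : σ) (a : ℕ) :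
    ∑ m ∈ Finset.range (Fintype.card σ),
        hsymmInt σ R ((a : ℤ) - m) * (prodOneSub (Finset.univ.erase k) X).coeff m = X k ^ a := by
  have hdeg : (prodOneSub (Finset.univ.erase k) (X : σ → MvPolynomial σ R)).natDegree
      < Fintype.card σ :=
    (natDegree_prodOneSub_le _ _).trans_lt (Finset.card_erase_lt_of_mem (Finset.mem_univ k))
  rw [← coeff_mul_mk_hsymm hdeg, mk_hsymm_eq_prod_mk_pow,
    prodOneSub_erase_mul_prod_mk_pow (Finset.mem_univ k), PowerSeries.coeff_mk]

end CompleteHomogeneous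

section Determinants

lemma prod_filter_fst_lt_snd {ι M : Type*} [Fintype ι] [Preorder ι] [DecidableLT ι]
    [LocallyFiniteOrderTop ι] [CommMonoid M] (f : ι → ι → M) :
    ∏ p ∈ Finset.univ.filter (fun p : ι × ι => p.1 < p.2), f p.1 p.2
      = ∏ i, ∏ j ∈ Finset.Ioi i, f i j := by
  rw [Finset.prod_filter, Fintype.prod_prod_type]
  refine Finset.prod_congr rfl fun i _ => ?_
  rw [← Finset.prod_filter]
  exact Finset.prod_congr (by ext; simp) fun _ _ => rfl

variable (n : ℕ) (R : Type*)

/-- The matrix `(h_{a_i - (n - 1 - j)})_{i,j}` in `n` variables; for `a = λ + δ` this is the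
Jacobi–Trudi matrix `(h_{λ_i - i + j})_{i,j}`. -/
def hsymmMatrix [CommSemiring R] {ι : Type*} (a : ι → ℕ) :
    Matrix ι (Fin n) (MvPolynomial (Fin n) R) :=
  Matrix.of fun i j => hsymmInt (Fin n) R ((a i : ℤ) - j.rev.1)

/-- The matrix whose `(j, k)` entry is the coefficient of `t^(n-1-j)` in `∏_{l ≠ k} (1 - x_l t)`. -/
def prodOneSubMatrix [CommRing R] : Matrix (Fin n) (Fin n) (MvPolynomial (Fin n) R) :=
  Matrix.of fun j k => (prodOneSub (Finset.univ.erase k) X).coeff j.rev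

lemma hsymmMatrix_mul_prodOneSubMatrix [CommRing R] {ι : Type*} (a : ι → ℕ) :
    hsymmMatrix n R a * prodOneSubMatrix n R = Matrix.of fun i k => X k ^ a i := by
  ext1 i k
  calc
    (hsymmMatrix n R a * prodOneSubMatrix n R) i k
      = ∑ j : Fin n, hsymmInt (Fin n) R ((a i : ℤ) - j.rev.1) *
          (prodOneSub (Finset.univ.erase k) X).coeff j.rev := rfl
    _ = ∑ j : Fin n, hsymmInt (Fin n) R ((a i : ℤ) - j.1) *
          (prodOneSub (Finset.univ.erase k) X).coeff j :=
        Equiv.sum_comp Fin.revPerm fun j : Fin n => hsymmInt (Fin n) R ((a i : ℤ) - j.1) *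
          (prodOneSub (Finset.univ.erase k) X).coeff j
    _ = X k ^ a i := by
        rw [← sum_hsymmInt_mul_coeff, Fintype.card_fin, Finset.sum_range]

lemma det_hsymmMatrix_val_rev [CommRing R] :
    (hsymmMatrix n R fun i : Fin n => i.rev.1).det = 1 := by
  rw [Matrix.det_of_isUpperTriangular]
  · simp [hsymmMatrix, hsymmInt]
  · intro i j (hji : j < i)
    have hrev : ¬ j.rev.1 ≤ i.rev.1 := not_le.mpr (Fin.rev_lt_rev.mpr hji)
    rw [hsymmMatrix, Matrix.of_apply, hsymmInt_natCast_sub, if_neg hrev]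

lemma det_prodOneSubMatrix [CommRing R] :
    (prodOneSubMatrix n R).det =
      ∏ p ∈ Finset.univ.filter (fun p : Fin n × Fin n => p.1 < p.2), (X p.1 - X p.2) := by
  have hV : (hsymmMatrix n R fun i : Fin n => i.rev.1) * prodOneSubMatrix n R
      = (Matrix.projVandermonde 1 X).transpose := by
    rw [hsymmMatrix_mul_prodOneSubMatrix]
    ext1 i k
    simp [Matrix.projVandermonde_apply]
  calc
    (prodOneSubMatrix n R).det
      = ((hsymmMatrix n R fun i : Fin n => i.rev.1) * prodOneSubMatrix n R).det := by
        rw [Matrix.det_mul, det_hsymmMatrix_val_rev, one_mul]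
    _ = ∏ i : Fin n, ∏ j ∈ Finset.Ioi i, (X i - X j) := by
        rw [hV, Matrix.det_transpose, Matrix.det_projVandermonde]
        simp only [Pi.one_apply, one_mul]
    _ = _ := (prod_filter_fst_lt_snd fun i j => X i - X j).symm

theorem jacobi_trudi_general [CommRing R] (a : Fin n → ℕ) :
    ∑ σ : Equiv.Perm (Fin n), (Equiv.Perm.sign σ : ℤ) •
        ∏ i : Fin n, (X i : MvPolynomial (Fin n) R) ^ a (σ i)
      = (Matrix.of fun i j : Fin n => hsymmInt (Fin n) R ((a i : ℤ) - j.rev.1)).det *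
        ∏ p ∈ Finset.univ.filter (fun p : Fin n × Fin n => p.1 < p.2), (X p.1 - X p.2) := by
  calc
    _ = (Matrix.of fun i k => (X k : MvPolynomial (Fin n) R) ^ a i).det :=
        (Matrix.det_apply _).symm
    _ = (hsymmMatrix n R a * prodOneSubMatrix n R).det := by rw [hsymmMatrix_mul_prodOneSubMatrix]
    _ = _ := by rw [Matrix.det_mul, det_prodOneSubMatrix, hsymmMatrix]

end Determinants

lemma hfinZ_eq_hsymmInt (n : ℕ) (r : ℤ) : hfinZ n r = hsymmInt (Fin n) ℤ r := rfl

lemma natCast_add_staircase_sub_rev {n : ℕ} (m : ℕ) (i j : Fin n) :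
    ((m + (n - 1 - i.1) : ℕ) : ℤ) - j.rev.1 = m - i.1 + j.1 := by
  rw [Fin.val_rev]
  omega

/-- the Jacobi–Trudi identity (equivalence of the Weyl character formula and
the determinant of complete homogeneous polynomials): for a partition `λ` with at most
`n` parts (padded with zeros) and `δ = (n−1, n−2, …, 1, 0)`, in `ℤ[x₁,…,x_n]`:
`∑_{σ ∈ S_n} sgn(σ) ∏_i x_i^{(λ+δ)_{σ(i)}}
   = det (h_{λ_i − i + j} (x₁,…,x_n)) · ∏_{i<j} (x_i − x_j)`. -/
theorem jacobi_trudi (n : ℕ) (hn : 1 ≤ n) (lam : Fin n → ℕ) (hlam : Antitone lam) :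
    ∑ σ : Equiv.Perm (Fin n), (Equiv.Perm.sign σ : ℤ) •
        ∏ i : Fin n, (X i : MvPolynomial (Fin n) ℤ) ^ (lam (σ i) + (n - 1 - (σ i).1))
      = (Matrix.of fun i j : Fin n => hfinZ n ((lam i : ℤ) - (i.1 : ℤ) + (j.1 : ℤ))).det *
        ∏ p ∈ Finset.univ.filter (fun p : Fin n × Fin n => p.1 < p.2), (X p.1 - X p.2) := by
  simpa only [natCast_add_staircase_sub_rev, hfinZ_eq_hsymmInt] using
    jacobi_trudi_general n ℤ fun i => lam i + (n - 1 - i.1)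
end
end
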